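/- Let f_1, …, f_n : ℝ^d → ℝ be differentiable, let f = (1/n)·Σ_{i=1}^n f_i, fix points y, x⋆, φ¹, …, φⁿ ∈ ℝ^d and a batch size b ≥ 1, let j_1, …, j_b be i.i.d. uniform random indices in {1, …, n}, and define the SAGA estimator ∇̂f(y) = (1/b)·Σ_{l=1}^{b} (∇f_{j_l}(y) − ∇f_{j_l}(φ^{j_l})) + (1/n)·Σ_{i=1}^{n} ∇f_i(φ^i). Then E[∇̂f(y)] = ∇f(y), and E‖∇̂f(y) − ∇f(y)‖² ≤ (2/(b·n))·Σ_{i=1}^{n} ‖∇f_i(y) − ∇f_i(x⋆)‖² + (2/(b·n))·Σ_{i=1}^{n} ‖∇f_i(φ^i) − ∇f_i(x⋆)‖². -/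

import Mathlib

open Finset

/-! The estimation error is the batch mean of the centred control-variate differences
`∇f_i(y) - ∇f_i(φ^i)`. Independence kills the cross terms of its square norm, so that its second
moment is `1/b` times the variance of a single difference. The variance is at most the second
moment, and splitting the difference at `∇f_i(x⋆)` costs the factor `2`. -/

open scoped BigOperators RealInnerProductSpace

section UniformSampling

variable {ι κ M E : Type*} [Fintype ι] [Fintype κ]

lemma expect_eq_inv_card_smul_sum [AddCommMonoid M] [Module ℝ M] [Module ℚ≥0 M] (f : ι → M) :
    𝔼 i, f i = (Fintype.card ι : ℝ)⁻¹ • ∑ i, f i := by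
  rw [expect_univ, ← NNRat.cast_smul_eq_nnqsmul ℝ, NNRat.cast_inv, NNRat.cast_natCast]

section IndependentSampling

variable [DecidableEq κ] [Nonempty ι] [AddCommMonoid M] [Module ℚ≥0 M]

lemma expect_pi_eval (k : κ) (f : ι → M) : 𝔼 σ : κ → ι, f (σ k) = 𝔼 i, f i := calc
  𝔼 σ : κ → ι, f (σ k) = 𝔼 p : ι × ({l // l ≠ k} → ι), f p.1 :=
    Fintype.expect_equiv (Equiv.funSplitAt k ι) _ _ fun _ ↦ rfl
  _ = 𝔼 i, 𝔼 _τ : {l // l ≠ k} → ι, f i := by rw [← univ_product_univ, expect_product]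
  _ = 𝔼 i, f i := by simp only [Fintype.expect_const]

lemma expect_pi_eval_eval {k l : κ} (hkl : k ≠ l) (F : ι → ι → M) :
    𝔼 σ : κ → ι, F (σ k) (σ l) = 𝔼 i, 𝔼 j, F i j := calc
  𝔼 σ : κ → ι, F (σ k) (σ l) = 𝔼 p : ι × ({m // m ≠ k} → ι), F p.1 (p.2 ⟨l, hkl.symm⟩) :=
    Fintype.expect_equiv (Equiv.funSplitAt k ι) _ _ fun _ ↦ rfl
  _ = 𝔼 i, 𝔼 τ : {m // m ≠ k} → ι, F i (τ ⟨l, hkl.symm⟩) := by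
    rw [← univ_product_univ, expect_product]
  _ = 𝔼 i, 𝔼 j, F i j := by simp only [expect_pi_eval]

lemma expect_pi_expect_eval [Nonempty κ] (f : ι → M) :
    𝔼 σ : κ → ι, 𝔼 k, f (σ k) = 𝔼 i, f i := by
  rw [expect_comm]
  simp only [expect_pi_eval, Fintype.expect_const]

end IndependentSampling

section InnerProductSpace

variable [SeminormedAddCommGroup E] [InnerProductSpace ℝ E] [Module ℚ≥0 E]

lemma inner_expect (x : E) (f : ι → E) : ⟪x, 𝔼 i, f i⟫ = 𝔼 i, ⟪x, f i⟫ := by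
  simp only [expect_eq_inv_card_smul_sum, inner_smul_right, inner_sum, smul_eq_mul]

lemma expect_inner (f : ι → E) (x : E) : ⟪𝔼 i, f i, x⟫ = 𝔼 i, ⟪f i, x⟫ := by
  simp only [real_inner_comm x, inner_expect]

lemma norm_expect_sq (f : ι → E) : ‖𝔼 i, f i‖ ^ 2 = 𝔼 i, 𝔼 j, ⟪f i, f j⟫ := by
  rw [← real_inner_self_eq_norm_sq, expect_inner]
  simp only [inner_expect]

lemma expect_norm_balance_sq [Nonempty ι] (f : ι → E) :
    𝔼 i, ‖Fintype.balance f i‖ ^ 2 = 𝔼 i, ‖f i‖ ^ 2 - ‖𝔼 i, f i‖ ^ 2 := by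
  simp only [Fintype.balance_apply, norm_sub_sq_real, expect_add_distrib, expect_sub_distrib,
    ← mul_expect, ← expect_inner, real_inner_self_eq_norm_sq, Fintype.expect_const]
  ring

lemma expect_norm_balance_sq_le [Nonempty ι] (f : ι → E) :
    𝔼 i, ‖Fintype.balance f i‖ ^ 2 ≤ 𝔼 i, ‖f i‖ ^ 2 := by
  rw [expect_norm_balance_sq]
  exact sub_le_self _ (sq_nonneg _)

lemma expect_pi_norm_expect_eval_sq [DecidableEq κ] [Nonempty ι] [Nonempty κ] {f : ι → E}
    (hf : 𝔼 i, f i = 0) :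
    𝔼 σ : κ → ι, ‖𝔼 k, f (σ k)‖ ^ 2 = (Fintype.card κ : ℝ)⁻¹ * 𝔼 i, ‖f i‖ ^ 2 := by
  have cross (k l : κ) :
      𝔼 σ : κ → ι, ⟪f (σ k), f (σ l)⟫ = if k = l then 𝔼 i, ‖f i‖ ^ 2 else 0 := by
    split_ifs with hkl
    · simp only [hkl, real_inner_self_eq_norm_sq, expect_pi_eval l fun i ↦ ‖f i‖ ^ 2]
    · rw [expect_pi_eval_eval hkl fun i j ↦ ⟪f i, f j⟫, ← norm_expect_sq, hf, norm_zero,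
        zero_pow two_ne_zero]
  calc 𝔼 σ : κ → ι, ‖𝔼 k, f (σ k)‖ ^ 2
      = 𝔼 k, 𝔼 l, 𝔼 σ : κ → ι, ⟪f (σ k), f (σ l)⟫ := by
        simp only [norm_expect_sq]
        rw [expect_comm]
        exact expect_congr rfl fun k _ ↦ expect_comm _ _ _
    _ = (Fintype.card κ : ℝ)⁻¹ * 𝔼 i, ‖f i‖ ^ 2 := by
        simp only [cross, Fintype.expect_ite_eq, Fintype.expect_const, NNRat.smul_def,
          NNRat.cast_inv, NNRat.cast_natCast]

end InnerProductSpace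

lemma norm_sub_sq_le_two_mul [SeminormedAddCommGroup E] (x y z : E) :
    ‖x - y‖ ^ 2 ≤ 2 * (‖x - z‖ ^ 2 + ‖y - z‖ ^ 2) := calc
  ‖x - y‖ ^ 2 ≤ (‖x - z‖ + ‖y - z‖) ^ 2 := by
    gcongr
    simpa only [norm_sub_rev z y] using norm_sub_le_norm_sub_add_norm_sub x z y
  _ ≤ 2 * (‖x - z‖ ^ 2 + ‖y - z‖ ^ 2) := add_sq_le

/-- The SAGA estimator of the mean of `grad` on the batch `σ`, with control variates `table`:
`grad i` stands for `∇f_i(y)` and `table i` for `∇f_i(φ^i)`. A batch of `b` independent uniform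
indices is a uniformly random function `σ : κ → ι` with `b = Fintype.card κ`. -/
noncomputable def sagaEstimator [AddCommGroup M] [Module ℚ≥0 M] (grad table : ι → M)
    (σ : κ → ι) : M :=
  𝔼 k, (grad (σ k) - table (σ k)) + 𝔼 i, table i

lemma expect_sagaEstimator [DecidableEq κ] [Nonempty ι] [Nonempty κ] [AddCommGroup M]
    [Module ℚ≥0 M] (grad table : ι → M) :
    𝔼 σ : κ → ι, sagaEstimator grad table σ = 𝔼 i, grad i := by
  simp only [sagaEstimator, expect_add_distrib, expect_sub_distrib, expect_pi_expect_eval,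
    Fintype.expect_const, sub_add_cancel]

lemma sagaEstimator_sub_expect [Nonempty κ] [AddCommGroup M] [Module ℚ≥0 M] (grad table : ι → M)
    (σ : κ → ι) :
    sagaEstimator grad table σ - 𝔼 i, grad i = 𝔼 k, Fintype.balance (grad - table) (σ k) := by
  simp only [sagaEstimator, Fintype.balance_apply, Pi.sub_apply, expect_sub_distrib,
    Fintype.expect_const]
  abel

section GrowthCondition

variable [DecidableEq κ] [Nonempty ι] [Nonempty κ] [SeminormedAddCommGroup E]
  [InnerProductSpace ℝ E] [Module ℚ≥0 E]

lemma expect_norm_sagaEstimator_sub_expect_sq (grad table : ι → E) :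
    𝔼 σ : κ → ι, ‖sagaEstimator grad table σ - 𝔼 i, grad i‖ ^ 2 =
      (Fintype.card κ : ℝ)⁻¹ * 𝔼 i, ‖Fintype.balance (grad - table) i‖ ^ 2 := by
  simp only [sagaEstimator_sub_expect]
  exact expect_pi_norm_expect_eval_sq (Fintype.expect_balance _)

theorem saga_growth_condition_general (grad table ref : ι → E) :
    𝔼 σ : κ → ι, sagaEstimator grad table σ = 𝔼 i, grad i ∧
    𝔼 σ : κ → ι, ‖sagaEstimator grad table σ - 𝔼 i, grad i‖ ^ 2 ≤
      2 / Fintype.card κ * 𝔼 i, ‖grad i - ref i‖ ^ 2 +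
        2 / Fintype.card κ * 𝔼 i, ‖table i - ref i‖ ^ 2 := by
  refine ⟨expect_sagaEstimator grad table, ?_⟩
  calc 𝔼 σ : κ → ι, ‖sagaEstimator grad table σ - 𝔼 i, grad i‖ ^ 2
      = (Fintype.card κ : ℝ)⁻¹ * 𝔼 i, ‖Fintype.balance (grad - table) i‖ ^ 2 :=
        expect_norm_sagaEstimator_sub_expect_sq grad table
    _ ≤ (Fintype.card κ : ℝ)⁻¹ * 𝔼 i, ‖grad i - table i‖ ^ 2 := by
        gcongr ?_ * ?_
        exact expect_norm_balance_sq_le (grad - table)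
    _ ≤ (Fintype.card κ : ℝ)⁻¹ * 𝔼 i, 2 * (‖grad i - ref i‖ ^ 2 + ‖table i - ref i‖ ^ 2) := by
        gcongr with i
        exact norm_sub_sq_le_two_mul (grad i) (table i) (ref i)
    _ = _ := by
        rw [← mul_expect, expect_add_distrib]
        ring

end GrowthCondition

end UniformSampling

/-- **General growth condition for the SAGA gradient estimator.**
With `b` i.i.d. uniform indices (so that expectation is the uniform average over all
`n^b` index tuples), the SAGA estimator
`∇̂f(y) = (1/b) Σ_l (∇f_{j_l}(y) - ∇f_{j_l}(φ^{j_l})) + (1/n) Σ_i ∇f_i(φ^i)`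
is unbiased and satisfies
`E‖∇̂f(y) - ∇f(y)‖² ≤ (2/(bn)) Σ_i ‖∇f_i(y) - ∇f_i(x⋆)‖²
  + (2/(bn)) Σ_i ‖∇f_i(φ^i) - ∇f_i(x⋆)‖²`. -/
theorem saga_growth_condition
    {d : ℕ} (n : ℕ) (hn : 0 < n)
    (g : Fin n → EuclideanSpace ℝ (Fin d) → ℝ)
    (g' : Fin n → EuclideanSpace ℝ (Fin d) → EuclideanSpace ℝ (Fin d))
    (hgrad : ∀ i u, HasGradientAt (g i) (g' i u) u)
    (f : EuclideanSpace ℝ (Fin d) → ℝ)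
    (hf : ∀ u, f u = (n : ℝ)⁻¹ * ∑ i, g i u)
    (y xstar : EuclideanSpace ℝ (Fin d)) (φ : Fin n → EuclideanSpace ℝ (Fin d))
    (b : ℕ) (hb : 1 ≤ b) :
    ((n : ℝ) ^ b)⁻¹ • (∑ σ : Fin b → Fin n,
        ((b : ℝ)⁻¹ • (∑ l, (g' (σ l) y - g' (σ l) (φ (σ l))))
          + (n : ℝ)⁻¹ • ∑ i, g' i (φ i)))
      = (n : ℝ)⁻¹ • ∑ i, g' i y ∧
    ((n : ℝ) ^ b)⁻¹ *
        ∑ σ : Fin b → Fin n,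
          ‖((b : ℝ)⁻¹ • (∑ l, (g' (σ l) y - g' (σ l) (φ (σ l))))
              + (n : ℝ)⁻¹ • ∑ i, g' i (φ i)) - (n : ℝ)⁻¹ • ∑ i, g' i y‖ ^ 2 ≤
      2 / (b * n) * ∑ i, ‖g' i y - g' i xstar‖ ^ 2
        + 2 / (b * n) * ∑ i, ‖g' i (φ i) - g' i xstar‖ ^ 2 := by
  have : Nonempty (Fin n) := Fin.pos_iff_nonempty.mp hn
  have : Nonempty (Fin b) := Fin.pos_iff_nonempty.mp hb
  simpa only [sagaEstimator, expect_eq_inv_card_smul_sum, Fintype.card_fun, Fintype.card_fin,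
    Nat.cast_pow, smul_eq_mul, div_eq_mul_inv, mul_inv, mul_assoc] using
    saga_growth_condition_general (κ := Fin b) (g' · y) (fun i ↦ g' i (φ i)) (g' · xstar)
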